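/- arXiv:2108.04978 — 4 statements merged into one kernel-verified Lean document; each statement's English description precedes it below -/
import Mathlib

section
/- (Rényi-DP of the Gaussian Mechanism.) Let p be a positive integer, σ > 0, Δ ≥ 0, and let μ, ν ∈ ℝ^p be vectors with ‖μ − ν‖₂ ≤ Δ. Let P be the product over coordinates j of the Gaussian measures on ℝ with mean μ_j and variance σ², and let Q be the analogous product with means ν_j. Then for every α > 1, the Rényi divergence of order α satisfies D_α(P ‖ Q) = α ‖μ − ν‖₂² / (2σ²), and in particular D_α(P ‖ Q) ≤ α Δ² / (2σ²). -/
open MeasureTheory ProbabilityTheory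

/-- The Rényi divergence of order `α` between probability measures `P` and `Q`
(with `P ≪ Q`): `D_α(P‖Q) = (1/(α−1)) · log ∫ (dP/dQ)^α dQ`. -/
noncomputable def renyiDiv {X : Type*} [MeasurableSpace X] (α : ℝ) (P Q : Measure X) : ℝ :=
  (α - 1)⁻¹ * Real.log (∫ x, (P.rnDeriv Q x).toReal ^ α ∂Q)

/-! An equal-variance Gaussian translation is an exponential tilt: `N(n + v t, v)` has density
proportional to `exp (t x)` with respect to `N(n, v)`. Tilting commutes with finite products, so
`P` is `Q` tilted by the linear form `f x = ∑ j, (μ j - ν j) / σ ^ 2 * x j`. The `α`-th power of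
the density of a tilt is again an exponential, hence `D_α(P‖Q)` only involves the cumulant
generating function of `f` at `α` and at `1`; for Gaussians that function is quadratic. -/

theorem renyiDiv_tilted {X : Type*} [MeasurableSpace X] {Q : Measure X} [SigmaFinite Q] {f : X → ℝ}
    {α : ℝ} (hf : Integrable (fun x ↦ Real.exp (f x)) Q)
    (hαf : Integrable (fun x ↦ Real.exp (α * f x)) Q) :
    renyiDiv α (Q.tilted f) Q = (α - 1)⁻¹ * (cgf f Q α - α * cgf f Q 1) := by
  rcases eq_zero_or_neZero Q with rfl | _
  · simp [renyiDiv]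
  have hpow : (fun x ↦ ((Q.tilted f).rnDeriv Q x).toReal ^ α) =ᵐ[Q]
      fun x ↦ Real.exp (α * f x) / mgf f Q 1 ^ α := by
    filter_upwards [
      rnDeriv_tilted_left_self (Real.aemeasurable_of_aemeasurable_exp hf.1.aemeasurable)]
      with x hx
    rw [hx, ENNReal.toReal_ofReal (by positivity), Real.div_rpow (by positivity) (by positivity),
      ← Real.exp_mul, mul_comm (f x)]
    simp only [mgf, one_mul]
  have hmgf_one : 0 < mgf f Q 1 := mgf_pos_iff.2 (by simpa using hf)
  have hmgf_α : 0 < mgf f Q α := mgf_pos_iff.2 hαf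
  rw [renyiDiv, integral_congr_ae hpow, integral_div, ← mgf,
    Real.log_div hmgf_α.ne' (Real.rpow_pos_of_pos hmgf_one α).ne', Real.log_rpow hmgf_one, cgf, cgf]

theorem tilted_mul_gaussianReal (m t : ℝ) (v : NNReal) :
    (gaussianReal m v).tilted (fun x ↦ t * x) = gaussianReal (m + v * t) v := by
  have := isProbabilityMeasure_tilted (integrable_exp_mul_gaussianReal (μ := m) (v := v) t)
  have hmgf : mgf id ((gaussianReal m v).tilted fun x ↦ t * x) =
      mgf id (gaussianReal (m + v * t) v) := by
    ext s
    calc mgf id ((gaussianReal m v).tilted fun x ↦ t * x) s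
        = mgf id (gaussianReal m v) (t + s) / mgf id (gaussianReal m v) t := by
          simp only [mgf, integral_exp_tilted, Pi.add_apply, id, add_mul]
      _ = mgf id (gaussianReal (m + v * t) v) s := by
          simp only [mgf_id_gaussianReal]
          rw [← Real.exp_sub]
          ring_nf
  -- The moment generating function is finite on all of `ℝ`, hence determines the measure.
  refine Measure.ext_of_complexMGF_id_eq (funext fun z ↦ ?_)
  refine eqOn_complexMGF_of_mgf hmgf ?_
  simp [integrableExpSet_eq_of_mgf hmgf, integrableExpSet_id_gaussianReal]

section Pi

variable {ι : Type*} [Fintype ι]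

section Measure

variable {E : ι → Type*} [∀ i, MeasurableSpace (E i)] (Q : ∀ i, Measure (E i))
  [∀ i, SigmaFinite (Q i)] (f : ∀ i, E i → ℝ)

theorem tilted_pi :
    (Measure.pi Q).tilted (fun x ↦ ∑ i, f i (x i)) = Measure.pi fun i ↦ (Q i).tilted (f i) := by
  refine (Measure.pi_eq fun s hs ↦ ?_).symm
  simp only [tilted_apply_eq_ofReal_integral' _ (MeasurableSet.univ_pi hs),
    tilted_apply_eq_ofReal_integral' _ (hs _), Real.exp_sum, Measure.restrict_pi_pi,
    integral_fintype_prod_eq_prod (fun i x ↦ Real.exp (f i x)), integral_div]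
  rw [← ENNReal.ofReal_prod_of_nonneg fun i _ ↦ by positivity, Finset.prod_div_distrib]

theorem mgf_sum_pi (s : ℝ) :
    mgf (fun x ↦ ∑ i, f i (x i)) (Measure.pi Q) s = ∏ i, mgf (f i) (Q i) s := by
  simp only [mgf, Finset.mul_sum, Real.exp_sum,
    integral_fintype_prod_eq_prod fun i x ↦ Real.exp (s * f i x)]

end Measure

theorem mgf_sum_mul_pi_gaussianReal (m t : ι → ℝ) (v : ι → NNReal) (s : ℝ) :
    mgf (fun x : ι → ℝ ↦ ∑ i, t i * x i) (Measure.pi fun i ↦ gaussianReal (m i) (v i)) s =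
      Real.exp (∑ i, (m i * (s * t i) + v i * (s * t i) ^ 2 / 2)) := by
  rw [mgf_sum_pi _ (fun i y ↦ t i * y), Real.exp_sum]
  refine Finset.prod_congr rfl fun i _ ↦ ?_
  rw [mgf_const_mul, mgf_fun_id_gaussianReal, mul_comm s]

theorem renyiDiv_pi_gaussianReal_add_mul (m t : ι → ℝ) (v : ι → NNReal) {α : ℝ}
    (hα : α ≠ 1) :
    renyiDiv α (Measure.pi fun i ↦ gaussianReal (m i + v i * t i) (v i))
        (Measure.pi fun i ↦ gaussianReal (m i) (v i)) = ∑ i, α * (v i * t i ^ 2) / 2 := by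
  set Q := Measure.pi fun i ↦ gaussianReal (m i) (v i)
  set f : (ι → ℝ) → ℝ := fun x ↦ ∑ i, t i * x i
  have hmgf := mgf_sum_mul_pi_gaussianReal m t v
  have hint (s : ℝ) : Integrable (fun x ↦ Real.exp (s * f x)) Q :=
    mgf_pos_iff.1 (hmgf s ▸ Real.exp_pos _)
  have hcgf (s : ℝ) : cgf f Q s = ∑ i, (m i * (s * t i) + v i * (s * t i) ^ 2 / 2) := by
    rw [cgf, hmgf, Real.log_exp]
  have htilt : Measure.pi (fun i ↦ gaussianReal (m i + v i * t i) (v i)) = Q.tilted f := by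
    simp only [Q, f, tilted_pi _ fun i y ↦ t i * y, tilted_mul_gaussianReal]
  rw [htilt, renyiDiv_tilted (by simpa using hint 1) (hint α), hcgf, hcgf,
    inv_mul_eq_iff_eq_mul₀ (sub_ne_zero.2 hα), Finset.mul_sum, Finset.mul_sum,
    ← Finset.sum_sub_distrib]
  exact Finset.sum_congr rfl fun i _ ↦ by ring

theorem renyiDiv_pi_gaussianReal (m n : ι → ℝ) {v : ι → NNReal}
    (hv : ∀ i, v i ≠ 0) {α : ℝ} (hα : α ≠ 1) :
    renyiDiv α (Measure.pi fun i ↦ gaussianReal (m i) (v i))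
        (Measure.pi fun i ↦ gaussianReal (n i) (v i)) =
      ∑ i, α * (m i - n i) ^ 2 / (2 * v i) := by
  have hv' (i : ι) : (v i : ℝ) ≠ 0 := NNReal.coe_ne_zero.2 (hv i)
  have hm (i : ι) : n i + v i * ((m i - n i) / v i) = m i := by
    rw [mul_div_cancel₀ _ (hv' i), add_sub_cancel]
  have h := renyiDiv_pi_gaussianReal_add_mul n (fun i ↦ (m i - n i) / v i) v hα
  simp only [hm] at h
  rw [h]
  refine Finset.sum_congr rfl fun i _ ↦ ?_
  have := hv' i
  field_simp

theorem renyiDP_gaussian_mechanism_general {σ Δ : ℝ} (hσ : σ ≠ 0)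
    {μ ν : EuclideanSpace ℝ ι} (hsens : ‖μ - ν‖ ≤ Δ) {α : ℝ} (hα₀ : 0 ≤ α) (hα₁ : α ≠ 1) :
    renyiDiv α (Measure.pi fun j ↦ gaussianReal (μ j) (σ ^ 2).toNNReal)
        (Measure.pi fun j ↦ gaussianReal (ν j) (σ ^ 2).toNNReal) =
      α * ‖μ - ν‖ ^ 2 / (2 * σ ^ 2) ∧
    renyiDiv α (Measure.pi fun j ↦ gaussianReal (μ j) (σ ^ 2).toNNReal)
        (Measure.pi fun j ↦ gaussianReal (ν j) (σ ^ 2).toNNReal) ≤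
      α * Δ ^ 2 / (2 * σ ^ 2) := by
  have hvar : (σ ^ 2).toNNReal ≠ 0 := (Real.toNNReal_pos.2 (by positivity)).ne'
  have heq : renyiDiv α (Measure.pi fun j ↦ gaussianReal (μ j) (σ ^ 2).toNNReal)
      (Measure.pi fun j ↦ gaussianReal (ν j) (σ ^ 2).toNNReal) =
      α * ‖μ - ν‖ ^ 2 / (2 * σ ^ 2) := by
    rw [renyiDiv_pi_gaussianReal _ _ (fun _ ↦ hvar) hα₁, Real.coe_toNNReal _ (sq_nonneg σ),
      EuclideanSpace.real_norm_sq_eq, Finset.mul_sum, Finset.sum_div]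
    simp only [PiLp.sub_apply]
  refine ⟨heq, heq.trans_le ?_⟩
  gcongr

end Pi

/-- **Rényi-DP of the Gaussian Mechanism.**
For `σ > 0`, `Δ ≥ 0` and `μ, ν ∈ ℝ^p` with `‖μ − ν‖₂ ≤ Δ`, let `P` (resp. `Q`) be the product
over coordinates of Gaussians with means `μ_j` (resp. `ν_j`) and variance `σ²`.  Then for every
`α > 1`, `D_α(P‖Q) = α ‖μ − ν‖₂² / (2σ²)`, and in particular `D_α(P‖Q) ≤ α Δ² / (2σ²)`. -/
theorem renyiDP_gaussian_mechanism (p : ℕ) (hp : 0 < p) (σ Δ : ℝ) (hσ : 0 < σ) (hΔ : 0 ≤ Δ)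
    (μ ν : EuclideanSpace ℝ (Fin p)) (hsens : ‖μ - ν‖ ≤ Δ) (α : ℝ) (hα : 1 < α) :
    renyiDiv α (Measure.pi fun j => gaussianReal (μ j) (σ ^ 2).toNNReal)
        (Measure.pi fun j => gaussianReal (ν j) (σ ^ 2).toNNReal) =
      α * ‖μ - ν‖ ^ 2 / (2 * σ ^ 2) ∧
    renyiDiv α (Measure.pi fun j => gaussianReal (μ j) (σ ^ 2).toNNReal)
        (Measure.pi fun j => gaussianReal (ν j) (σ ^ 2).toNNReal) ≤
      α * Δ ^ 2 / (2 * σ ^ 2) :=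
  renyiDP_gaussian_mechanism_general hσ.ne' hsens (zero_le_one.trans hα.le) hα.ne'
end

section
/- (Pure DP of the Exponential Mechanism.) Let R be a finite nonempty type, ε ≥ 0, Δ ≥ 0, and let q, q′ : R → ℝ be quality score functions with |q(r) − q′(r)| ≤ Δ for all r ∈ R. Define probability mass functions P(r) = exp(ε · q(r)) / Σ_{s∈R} exp(ε · q(s)) and Q(r) = exp(ε · q′(r)) / Σ_{s∈R} exp(ε · q′(s)). Then for every r ∈ R, P(r) ≤ exp(2εΔ) · Q(r). -/
/-!
Each weight changes by a factor at most `exp (ε * Δ)` in either direction when `q` is replaced by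
`q'`. Summing, so does the normalizing constant: one factor is lost in the numerator and one in the
denominator.
-/

section

variable {ι : Type*}

theorem div_tsum_le_mul_div_tsum {w w' : ι → ℝ} {a b : ℝ} (hw : Summable w)
    (w_pos : ∀ i, 0 < w i) (w'_pos : ∀ i, 0 < w' i)
    (w_le : ∀ i, w i ≤ a * w' i) (w'_le : ∀ i, w' i ≤ b * w i) (i : ι) :
    w i / ∑' j, w j ≤ a * b * (w' i / ∑' j, w' j) := by
  have hw' : Summable w' := .of_nonneg_of_le (fun j => (w'_pos j).le) w'_le (hw.mul_left b)
  have tsum_w_pos : 0 < ∑' j, w j := hw.tsum_pos (fun j => (w_pos j).le) i (w_pos i)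
  have tsum_w'_pos : 0 < ∑' j, w' j := hw'.tsum_pos (fun j => (w'_pos j).le) i (w'_pos i)
  have tsum_w'_le : ∑' j, w' j ≤ b * ∑' j, w j :=
    (hw'.tsum_le_tsum w'_le (hw.mul_left b)).trans_eq tsum_mul_left
  have inv_tsum_w_le : (∑' j, w j)⁻¹ ≤ b / ∑' j, w' j := by
    rwa [inv_eq_one_div, div_le_div_iff₀ tsum_w_pos tsum_w'_pos, one_mul]
  calc w i / ∑' j, w j
      = w i * (∑' j, w j)⁻¹ := div_eq_mul_inv _ _
    _ ≤ a * w' i * (b / ∑' j, w' j) :=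
        mul_le_mul (w_le i) inv_tsum_w_le (inv_nonneg.2 tsum_w_pos.le) ((w_pos i).le.trans (w_le i))
    _ = a * b * (w' i / ∑' j, w' j) := by ring

theorem exp_le_exp_mul_exp_of_abs_sub_le {x y c : ℝ} (h : |x - y| ≤ c) :
    Real.exp x ≤ Real.exp c * Real.exp y := by
  rw [← Real.exp_add, Real.exp_le_exp]
  exact sub_le_iff_le_add.1 (le_of_abs_le h)

theorem exp_div_tsum_exp_le_of_abs_sub_le {f g : ι → ℝ} {c : ℝ}
    (hf : Summable fun i => Real.exp (f i)) (hfg : ∀ i, |f i - g i| ≤ c) (i : ι) :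
    Real.exp (f i) / ∑' j, Real.exp (f j) ≤
      Real.exp (2 * c) * (Real.exp (g i) / ∑' j, Real.exp (g j)) := by
  rw [two_mul, Real.exp_add]
  exact div_tsum_le_mul_div_tsum hf (fun _ => Real.exp_pos _) (fun _ => Real.exp_pos _)
    (fun j => exp_le_exp_mul_exp_of_abs_sub_le (hfg j))
    (fun j => exp_le_exp_mul_exp_of_abs_sub_le (abs_sub_comm (f j) (g j) ▸ hfg j)) i

end

theorem exponential_mechanism_pure_dp_general {R : Type*} (ε Δ : ℝ) (hε : 0 ≤ ε) (q q' : R → ℝ)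
    (hq : Summable fun r => Real.exp (ε * q r)) (hsens : ∀ r, |q r - q' r| ≤ Δ)
    (P Q : R → ℝ)
    (hP : ∀ r, P r = Real.exp (ε * q r) / ∑' s, Real.exp (ε * q s))
    (hQ : ∀ r, Q r = Real.exp (ε * q' r) / ∑' s, Real.exp (ε * q' s)) :
    ∀ r, P r ≤ Real.exp (2 * ε * Δ) * Q r := by
  intro r
  have scaled_sens (s : R) : |ε * q s - ε * q' s| ≤ ε * Δ := by
    rw [← mul_sub, abs_mul, abs_of_nonneg hε]
    exact mul_le_mul_of_nonneg_left (hsens s) hε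
  rw [hP, hQ, mul_assoc 2 ε Δ]
  exact exp_div_tsum_exp_le_of_abs_sub_le hq scaled_sens r

/-- **Pure DP of the Exponential Mechanism.**
For a finite nonempty type `R`, `ε ≥ 0`, `Δ ≥ 0`, and quality scores `q, q'` with
`|q(r) − q'(r)| ≤ Δ` for all `r`, the exponential-mechanism output distributions
`P(r) = exp(ε q(r)) / Σ_s exp(ε q(s))` and `Q(r) = exp(ε q'(r)) / Σ_s exp(ε q'(s))` satisfy
`P(r) ≤ exp(2εΔ) · Q(r)` for every `r`. -/
theorem exponential_mechanism_pure_dp {R : Type*} [Fintype R] [Nonempty R]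
    (ε Δ : ℝ) (hε : 0 ≤ ε) (hΔ : 0 ≤ Δ) (q q' : R → ℝ)
    (hsens : ∀ r, |q r - q' r| ≤ Δ)
    (P Q : R → ℝ)
    (hP : ∀ r, P r = Real.exp (ε * q r) / ∑ s, Real.exp (ε * q s))
    (hQ : ∀ r, Q r = Real.exp (ε * q' r) / ∑ s, Real.exp (ε * q' s)) :
    ∀ r, P r ≤ Real.exp (2 * ε * Δ) * Q r := by
  exact exponential_mechanism_pure_dp_general ε Δ hε q q' .of_finite hsens P Q
    (by simpa only [tsum_fintype] using hP) (by simpa only [tsum_fintype] using hQ)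
end

section
/- (Bounded range of the Exponential Mechanism.) Let R be a finite nonempty type, ε ≥ 0, Δ ≥ 0, and let q, q′ : R → ℝ satisfy |q(r) − q′(r)| ≤ Δ for all r ∈ R. Define P(r) = exp(ε · q(r)) / Σ_{s∈R} exp(ε · q(s)) and Q(r) = exp(ε · q′(r)) / Σ_{s∈R} exp(ε · q′(s)). Then there exists a real number c such that for every r ∈ R, c ≤ log(P(r)/Q(r)) ≤ c + 2εΔ. -/
section BoundedRange

open MeasureTheory Set

variable {R : Type*}

/-- The densities `P` and `Q` have bounded range `β`: all their log-ratios lie in one interval of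
length `β`. The notion is meant for positive densities, as `Real.log` and division take junk values
at `0`. -/
def HasBoundedRange (P Q : R → ℝ) (β : ℝ) : Prop :=
  ∃ c : ℝ, ∀ r, c ≤ Real.log (P r / Q r) ∧ Real.log (P r / Q r) ≤ c + β

variable [MeasurableSpace R] {μ : Measure R} {f g : R → ℝ}

/-- The density of `μ.tilted f` with respect to `μ`. The exponential mechanism with base measure
`μ`, score `q` and parameter `ε` has this output density for `f = ε * q`; on a finite type with
counting measure it is the probability mass function. -/
noncomputable def gibbsDensity (μ : Measure R) (f : R → ℝ) (r : R) : ℝ :=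
  Real.exp (f r) / ∫ s, Real.exp (f s) ∂μ

theorem gibbsDensity_count [Fintype R] [MeasurableSingletonClass R] (f : R → ℝ) (r : R) :
    gibbsDensity Measure.count f r = Real.exp (f r) / ∑ s, Real.exp (f s) := by
  rw [gibbsDensity, integral_count]

variable [NeZero μ]

theorem gibbsDensity_pos (hf : Integrable (fun r ↦ Real.exp (f r)) μ) (r : R) :
    0 < gibbsDensity μ f r :=
  div_pos (Real.exp_pos _) (integral_exp_pos hf)

theorem log_gibbsDensity (hf : Integrable (fun r ↦ Real.exp (f r)) μ) (r : R) :
    Real.log (gibbsDensity μ f r) = f r - Real.log (∫ s, Real.exp (f s) ∂μ) := by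
  rw [gibbsDensity, Real.log_div (Real.exp_ne_zero _) (integral_exp_pos hf).ne', Real.log_exp]

theorem log_gibbsDensity_div_gibbsDensity (hf : Integrable (fun r ↦ Real.exp (f r)) μ)
    (hg : Integrable (fun r ↦ Real.exp (g r)) μ) (r : R) :
    Real.log (gibbsDensity μ f r / gibbsDensity μ g r) =
      (f r - g r) -
        (Real.log (∫ s, Real.exp (f s) ∂μ) - Real.log (∫ s, Real.exp (g s) ∂μ)) := by
  rw [Real.log_div (gibbsDensity_pos hf r).ne' (gibbsDensity_pos hg r).ne',
    log_gibbsDensity hf, log_gibbsDensity hg, sub_sub_sub_comm]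

theorem hasBoundedRange_gibbsDensity (hf : Integrable (fun r ↦ Real.exp (f r)) μ)
    (hg : Integrable (fun r ↦ Real.exp (g r)) μ) {a β : ℝ}
    (hfg : ∀ r, f r - g r ∈ Icc a (a + β)) :
    HasBoundedRange (gibbsDensity μ f) (gibbsDensity μ g) β := by
  refine ⟨a - (Real.log (∫ s, Real.exp (f s) ∂μ) - Real.log (∫ s, Real.exp (g s) ∂μ)),
    fun r ↦ ?_⟩
  obtain ⟨hlower, hupper⟩ := hfg r
  rw [log_gibbsDensity_div_gibbsDensity hf hg]
  constructor <;> linarith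

theorem exponential_mechanism_bounded_range_general {ε Δ : ℝ} (hε : 0 ≤ ε) {q q' : R → ℝ}
    (hsens : ∀ r, |q r - q' r| ≤ Δ)
    (hq : Integrable (fun r ↦ Real.exp (ε * q r)) μ)
    (hq' : Integrable (fun r ↦ Real.exp (ε * q' r)) μ) :
    HasBoundedRange (gibbsDensity μ fun r ↦ ε * q r) (gibbsDensity μ fun r ↦ ε * q' r)
      (2 * ε * Δ) := by
  refine hasBoundedRange_gibbsDensity hq hq' (a := -(ε * Δ)) fun r ↦ ?_
  have hscaled : |ε * q r - ε * q' r| ≤ ε * Δ := by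
    rw [← mul_sub, abs_mul, abs_of_nonneg hε]
    exact mul_le_mul_of_nonneg_left (hsens r) hε
  obtain ⟨hlower, hupper⟩ := abs_le.mp hscaled
  exact ⟨hlower, by linarith⟩

end BoundedRange

/-- **Bounded range of the Exponential Mechanism.**
For a finite nonempty type `R`, `ε ≥ 0`, `Δ ≥ 0`, and quality scores `q, q'` with
`|q(r) − q'(r)| ≤ Δ` for all `r`, the log-probability ratios of the exponential-mechanism
output distributions all lie in an interval of length `2εΔ`: there exists `c ∈ ℝ` with
`c ≤ log(P(r)/Q(r)) ≤ c + 2εΔ` for every `r`. -/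
theorem exponential_mechanism_bounded_range {R : Type*} [Fintype R] [Nonempty R]
    (ε Δ : ℝ) (hε : 0 ≤ ε) (hΔ : 0 ≤ Δ) (q q' : R → ℝ)
    (hsens : ∀ r, |q r - q' r| ≤ Δ)
    (P Q : R → ℝ)
    (hP : ∀ r, P r = Real.exp (ε * q r) / ∑ s, Real.exp (ε * q s))
    (hQ : ∀ r, Q r = Real.exp (ε * q' r) / ∑ s, Real.exp (ε * q' s)) :
    ∃ c : ℝ, ∀ r, c ≤ Real.log (P r / Q r) ∧ Real.log (P r / Q r) ≤ c + 2 * ε * Δ := by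
  let _ : MeasurableSpace R := ⊤
  simpa only [HasBoundedRange, gibbsDensity_count, ← hP, ← hQ] using
    exponential_mechanism_bounded_range_general (μ := MeasureTheory.Measure.count) hε hsens
      .of_finite .of_finite
end

section
/- (Bounded range implies Rényi-DP.) Let R be a finite nonempty type and let P, Q : R → ℝ be strictly positive probability mass functions (P(r) > 0 and Q(r) > 0 for all r, with Σ_r P(r) = Σ_r Q(r) = 1). Suppose there exist c ∈ ℝ and β ≥ 0 such that c ≤ log(P(r)/Q(r)) ≤ c + β for every r ∈ R. Then for every α > 1, the Rényi divergence of order α satisfies (1/(α−1)) · log (Σ_{r∈R} P(r)^α Q(r)^{1−α}) ≤ α β² / 8. -/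
/-! The log-likelihood ratio `X = log (p / q)` satisfies `E_p[exp (-X)] = ∫ q = 1`, and its cumulant
generating function `K` under `p` gives the Rényi divergence as `K (α - 1) / (α - 1)`. Hoeffding's
lemma bounds `K t` by `t * E_p[X] + β² t² / 8`. At `t = -1`, where `K` vanishes, this bounds the
Kullback–Leibler divergence `E_p[X]` by `β² / 8`; at `t = α - 1` it then gives
`K (α - 1) ≤ (α - 1) β² / 8 + (α - 1)² β² / 8 = (α - 1) α β² / 8`. -/

open MeasureTheory ProbabilityTheory

section Hoeffding

variable {Ω : Type*} {mΩ : MeasurableSpace Ω} {μ : Measure Ω} [IsProbabilityMeasure μ]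
  {X : Ω → ℝ} {a b : ℝ}

lemma cgf_le_of_mem_Icc (hm : AEMeasurable X μ) (hb : ∀ᵐ ω ∂μ, X ω ∈ Set.Icc a b) (t : ℝ) :
    cgf X μ t ≤ t * μ[X] + (b - a) ^ 2 * t ^ 2 / 8 := by
  have hpos : 0 < mgf X μ t := mgf_pos (integrable_exp_mul_of_mem_Icc hm hb)
  have hcentered : cgf (fun ω ↦ X ω - μ[X]) μ t = cgf X μ t - t * μ[X] := by
    simp only [cgf, sub_eq_add_neg, mgf_add_const, Real.log_mul hpos.ne' (Real.exp_ne_zero _),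
      Real.log_exp, mul_neg]
  have hoeffding := (hasSubgaussianMGF_of_mem_Icc hm hb).cgf_le t
  rw [hcentered] at hoeffding
  push_cast [Real.norm_eq_abs, div_pow, sq_abs] at hoeffding
  linarith

lemma integral_le_of_mem_Icc_of_cgf_neg_one_nonneg (hm : AEMeasurable X μ)
    (hb : ∀ᵐ ω ∂μ, X ω ∈ Set.Icc a b) (hcgf : 0 ≤ cgf X μ (-1)) :
    μ[X] ≤ (b - a) ^ 2 / 8 := by
  linarith [cgf_le_of_mem_Icc hm hb (-1)]

lemma cgf_le_of_mem_Icc_of_cgf_neg_one_nonneg (hm : AEMeasurable X μ)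
    (hb : ∀ᵐ ω ∂μ, X ω ∈ Set.Icc a b) (hcgf : 0 ≤ cgf X μ (-1)) {t : ℝ} (ht : 0 ≤ t) :
    cgf X μ t ≤ t * ((t + 1) * (b - a) ^ 2 / 8) :=
  calc cgf X μ t
    _ ≤ t * μ[X] + (b - a) ^ 2 * t ^ 2 / 8 := cgf_le_of_mem_Icc hm hb t
    _ ≤ t * ((b - a) ^ 2 / 8) + (b - a) ^ 2 * t ^ 2 / 8 := by
        gcongr; exact integral_le_of_mem_Icc_of_cgf_neg_one_nonneg hm hb hcgf
    _ = t * ((t + 1) * (b - a) ^ 2 / 8) := by ring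

end Hoeffding

lemma mul_exp_sub_one_mul_log_div {x y : ℝ} (hx : 0 < x) (hy : 0 < y) (α : ℝ) :
    x * Real.exp ((α - 1) * Real.log (x / y)) = x ^ α * y ^ (1 - α) := by
  rw [Real.rpow_def_of_pos hx, Real.rpow_def_of_pos hy, Real.log_div hx.ne' hy.ne']
  nth_rw 1 [← Real.exp_log hx]
  rw [← Real.exp_add, ← Real.exp_add]
  ring_nf

section Density

variable {Ω : Type*} {mΩ : MeasurableSpace Ω} {μ : Measure Ω} {p q : Ω → ℝ}

lemma isProbabilityMeasure_withDensity_ofReal (hp : 0 ≤ᵐ[μ] p) (hp_one : ∫ ω, p ω ∂μ = 1) :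
    IsProbabilityMeasure (μ.withDensity fun ω ↦ ENNReal.ofReal (p ω)) := by
  have hp_int : Integrable p μ := .of_integral_ne_zero (by simp [hp_one])
  refine ⟨?_⟩
  rw [withDensity_apply _ .univ, Measure.restrict_univ,
    ← ofReal_integral_eq_lintegral_ofReal hp_int hp, hp_one, ENNReal.ofReal_one]

lemma toReal_ofReal_smul_exp_log_div_ae_eq (hp : ∀ᵐ ω ∂μ, 0 < p ω) (hq : ∀ᵐ ω ∂μ, 0 < q ω)
    (α : ℝ) :
    (fun ω ↦ (ENNReal.ofReal (p ω)).toReal • Real.exp ((α - 1) * Real.log (p ω / q ω)))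
      =ᵐ[μ] fun ω ↦ p ω ^ α * q ω ^ (1 - α) := by
  filter_upwards [hp, hq] with ω hpω hqω
  rw [ENNReal.toReal_ofReal hpω.le, smul_eq_mul, mul_exp_sub_one_mul_log_div hpω hqω]

lemma integrable_exp_log_div_withDensity_iff (hpm : AEMeasurable p μ) (hp : ∀ᵐ ω ∂μ, 0 < p ω)
    (hq : ∀ᵐ ω ∂μ, 0 < q ω) (α : ℝ) :
    Integrable (fun ω ↦ Real.exp ((α - 1) * Real.log (p ω / q ω)))
        (μ.withDensity fun ω ↦ ENNReal.ofReal (p ω)) ↔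
      Integrable (fun ω ↦ p ω ^ α * q ω ^ (1 - α)) μ := by
  rw [integrable_withDensity_iff_integrable_smul₀' hpm.ennreal_ofReal (by simp)]
  exact integrable_congr (toReal_ofReal_smul_exp_log_div_ae_eq hp hq α)

lemma mgf_log_div_withDensity (hpm : AEMeasurable p μ) (hp : ∀ᵐ ω ∂μ, 0 < p ω)
    (hq : ∀ᵐ ω ∂μ, 0 < q ω) (α : ℝ) :
    mgf (fun ω ↦ Real.log (p ω / q ω)) (μ.withDensity fun ω ↦ ENNReal.ofReal (p ω)) (α - 1)
      = ∫ ω, p ω ^ α * q ω ^ (1 - α) ∂μ := by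
  rw [mgf, integral_withDensity_eq_integral_toReal_smul₀ hpm.ennreal_ofReal (by simp)]
  exact integral_congr_ae (toReal_ofReal_smul_exp_log_div_ae_eq hp hq α)

theorem bounded_range_implies_rdp_general (hp : ∀ᵐ ω ∂μ, 0 < p ω) (hq : ∀ᵐ ω ∂μ, 0 < q ω)
    (hp_one : ∫ ω, p ω ∂μ = 1) (hq_one : ∫ ω, q ω ∂μ = 1) {c β : ℝ}
    (hrange : ∀ᵐ ω ∂μ, Real.log (p ω / q ω) ∈ Set.Icc c (c + β)) {α : ℝ} (hα : 1 < α) :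
    Integrable (fun ω ↦ p ω ^ α * q ω ^ (1 - α)) μ ∧
      (α - 1)⁻¹ * Real.log (∫ ω, p ω ^ α * q ω ^ (1 - α) ∂μ) ≤ α * β ^ 2 / 8 := by
  have hpm : AEMeasurable p μ :=
    (Integrable.of_integral_ne_zero (by simp [hp_one])).aemeasurable
  have hqm : AEMeasurable q μ :=
    (Integrable.of_integral_ne_zero (by simp [hq_one])).aemeasurable
  let ν := μ.withDensity fun ω ↦ ENNReal.ofReal (p ω)
  let X := fun ω ↦ Real.log (p ω / q ω)
  have hν : IsProbabilityMeasure ν :=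
    isProbabilityMeasure_withDensity_ofReal (hp.mono fun _ ↦ le_of_lt) hp_one
  have hac : ν ≪ μ := withDensity_absolutelyContinuous μ _
  have hX : AEMeasurable X ν := (hpm.div hqm).log.mono_ac hac
  have hXrange : ∀ᵐ ω ∂ν, X ω ∈ Set.Icc c (c + β) := hac.ae_le hrange
  have hcgf : cgf X ν (-1) = 0 := by
    have hmgf := mgf_log_div_withDensity hpm hp hq 0
    simp only [zero_sub, Real.rpow_zero, sub_zero, Real.rpow_one, one_mul, hq_one] at hmgf
    rw [cgf, hmgf, Real.log_one]
  refine ⟨(integrable_exp_log_div_withDensity_iff hpm hp hq α).1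
    (integrable_exp_mul_of_mem_Icc hX hXrange), ?_⟩
  rw [← mgf_log_div_withDensity hpm hp hq, inv_mul_le_iff₀ (sub_pos.2 hα)]
  simpa only [cgf, sub_add_cancel, add_sub_cancel_left] using
    cgf_le_of_mem_Icc_of_cgf_neg_one_nonneg hX hXrange hcgf.ge (sub_nonneg.2 hα.le)

end Density

/-- **Bounded range implies Rényi-DP.**
Let `P, Q` be strictly positive probability mass functions on a finite nonempty type `R`, and
suppose there exist `c ∈ ℝ` and `β ≥ 0` with `c ≤ log(P(r)/Q(r)) ≤ c + β` for every `r`.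
Then for every `α > 1`, the Rényi divergence of order `α` satisfies
`(1/(α−1)) · log (Σ_r P(r)^α Q(r)^(1−α)) ≤ α β² / 8`. -/
theorem bounded_range_implies_rdp {R : Type*} [Fintype R] [Nonempty R]
    (P Q : R → ℝ) (hPpos : ∀ r, 0 < P r) (hQpos : ∀ r, 0 < Q r)
    (hPsum : ∑ r, P r = 1) (hQsum : ∑ r, Q r = 1)
    (c β : ℝ) (hβ : 0 ≤ β)
    (hrange : ∀ r, c ≤ Real.log (P r / Q r) ∧ Real.log (P r / Q r) ≤ c + β)
    (α : ℝ) (hα : 1 < α) :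
    (α - 1)⁻¹ * Real.log (∑ r, P r ^ α * Q r ^ (1 - α)) ≤ α * β ^ 2 / 8 := by
  let _ : MeasurableSpace R := ⊤
  simpa only [integral_count] using (bounded_range_implies_rdp_general (μ := .count)
    (.of_forall hPpos) (.of_forall hQpos) (by rw [integral_count, hPsum])
    (by rw [integral_count, hQsum]) (.of_forall hrange) hα).2
end
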